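/- arXiv:2104.12251 — 2 statements merged into one kernel-verified Lean document; each statement's English description precedes it below -/
import Mathlib

section
/- Let n ≥ 1, μ > 0 and λ ∈ ℝ with ν := λ + 2μ > 0. Then there exists a constant C = C(n,μ,λ) such that every Schwartz vector field v : ℝⁿ → ℝⁿ satisfies ‖∇v‖_{L^∞} ≤ C ‖v‖_{L^∞}^{1/2} ‖𝓛v‖_{L^∞}^{1/2}. -/
open MeasureTheory
open scoped ENNReal NNReal

noncomputable section

/-- Euclidean space `ℝⁿ`. -/
abbrev En (n : ℕ) := EuclideanSpace ℝ (Fin n)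

/-- Partial derivative `∂ᵢ f` of a scalar function on `ℝⁿ`. -/
def pdv {n : ℕ} (i : Fin n) (f : En n → ℝ) (x : En n) : ℝ :=
  fderiv ℝ f x (EuclideanSpace.single i 1)

/-- The Lamé operator `𝓛u = μΔu + (λ+μ)∇(div u)` acting on vector fields. -/
def lame {n : ℕ} (μ lam : ℝ) (u : En n → En n) (x : En n) : En n :=
  (EuclideanSpace.equiv (Fin n) ℝ).symm fun i =>
    μ * (∑ j, pdv j (fun y => pdv j (fun z => u z i) y) x)
      + (lam + μ) * pdv i (fun y => ∑ j, pdv j (fun z => u z j) y) x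

/-!
The Gaussian `φ(z) = exp(-|z|²/2)` satisfies `∇φ = -zφ`, so the averages
`A(s, g) = ∫ φ(z) g(x + sz) dz` satisfy `∂ₛ A(s, g) = s A(s, Δg)`. Hence, for `w = ∇v`, the function
`B(s) = A(s, w) - (s²/2) A(s, Δw)` has derivative `-(s³/2) A(s, Δ²w)`, while
`B(0) = (∫ φ) ∇v(x)`. Moving a derivative of `g` onto `φ` costs a factor `1/s`, so
`|B(R)| ≲ ‖v‖_∞ / R`.

Put `f = 𝓛v`. From `div f = ν Δ div v` we get `μν Δ²v = ν Δf - (λ + μ) ∇ div f`, so `Δ²w` is a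
third-order operator applied to `f` and `|B'| ≲ ‖f‖_∞`. Thus `|∇v(x)| ≲ ‖v‖_∞ / R + R ‖f‖_∞` for
every `R > 0`, and it remains to optimize `R`. Only `L^∞` norms of `v` and `f` enter, although the
Riesz transforms in `f ↦ ∇²v` are unbounded on `L^∞`.
-/

open Filter Topology LineDeriv Laplacian
open scoped SchwartzMap

section SupNorm

variable {E F : Type*} [NormedAddCommGroup E] [NormedSpace ℝ E]
  [NormedAddCommGroup F] [NormedSpace ℝ F]

/-- The sup norm `‖f‖_{L^∞}` of a Schwartz function, as a real number. -/
def supNorm (f : 𝓢(E, F)) : ℝ := ‖f.toBoundedContinuousFunction‖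

theorem supNorm_nonneg (f : 𝓢(E, F)) : 0 ≤ supNorm f := norm_nonneg _

theorem norm_le_supNorm (f : 𝓢(E, F)) (x : E) : ‖f x‖ ≤ supNorm f :=
  f.toBoundedContinuousFunction.norm_coe_le_norm x

theorem supNorm_le {f : 𝓢(E, F)} {M : ℝ} (hM : 0 ≤ M) (h : ∀ x, ‖f x‖ ≤ M) : supNorm f ≤ M :=
  (BoundedContinuousFunction.norm_le hM).2 h

theorem eLpNorm_top_eq_ofReal_supNorm [MeasurableSpace E] {ρ : Measure E} [ρ.IsOpenPosMeasure]
    (f : 𝓢(E, F)) : eLpNorm f ⊤ ρ = ENNReal.ofReal (supNorm f) := by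
  rw [eLpNorm_exponent_top]
  have hle : eLpNormEssSup f ρ ≤ ENNReal.ofReal (supNorm f) :=
    eLpNormEssSup_le_of_ae_bound (.of_forall (norm_le_supNorm f))
  refine le_antisymm hle ((ENNReal.ofReal_le_iff_le_toReal ?_).2 ?_)
  · exact (hle.trans_lt ENNReal.ofReal_lt_top).ne
  have hae : ∀ᵐ x ∂ρ, ‖f x‖ₑ ≤ eLpNormEssSup f ρ := ae_le_eLpNormEssSup
  have hdense : Dense {x | ‖f x‖ₑ ≤ eLpNormEssSup f ρ} := Measure.dense_of_ae hae
  have hclosed : IsClosed {x | ‖f x‖ₑ ≤ eLpNormEssSup f ρ} :=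
    isClosed_le f.continuous.enorm continuous_const
  refine supNorm_le ENNReal.toReal_nonneg fun x => ?_
  rw [← toReal_enorm]
  refine ENNReal.toReal_mono (hle.trans_lt ENNReal.ofReal_lt_top).ne ?_
  exact hclosed.closure_subset (hdense x)

end SupNorm

theorem le_mul_of_forall_le_div_add_mul {a C m n : ℝ} (hC : 0 ≤ C) (hm : 0 ≤ m) (hn : 0 ≤ n)
    (h : ∀ R, 0 < R → a ≤ C * (m ^ 2 / R + R * n ^ 2)) : a ≤ 2 * C * (m * n) := by
  -- `R = m / n` is optimal; the shift by `ε` covers the cases `m = 0` and `n = 0`.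
  have hshift : ∀ ε > 0, a ≤ 2 * C * ((m + ε) * (n + ε)) := fun ε hε => by
    have hm' : 0 < m + ε := by linarith
    have hn' : 0 < n + ε := by linarith
    calc a ≤ C * (m ^ 2 / ((m + ε) / (n + ε)) + (m + ε) / (n + ε) * n ^ 2) :=
          h _ (div_pos hm' hn')
      _ ≤ C * ((m + ε) ^ 2 / ((m + ε) / (n + ε)) + (m + ε) / (n + ε) * (n + ε) ^ 2) := by
          gcongr <;> linarith
      _ = 2 * C * ((m + ε) * (n + ε)) := by field_simp; ring
  have hcont : Continuous fun ε : ℝ => 2 * C * ((m + ε) * (n + ε)) := by fun_prop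
  have hlim : Tendsto (fun ε : ℝ => 2 * C * ((m + ε) * (n + ε))) (𝓝[>] 0)
      (𝓝 (2 * C * (m * n))) := by
    simpa using (hcont.tendsto 0).mono_left nhdsWithin_le_nhds
  exact ge_of_tendsto hlim (eventually_of_mem self_mem_nhdsWithin hshift)

section Gaussian

theorem exists_one_add_pow_mul_exp_neg_sq_le (N : ℕ) :
    ∃ B : ℝ, ∀ r : ℝ, 0 ≤ r → (1 + r) ^ N * Real.exp (-(r ^ 2 / 2)) ≤ B := by
  refine ⟨N.factorial * Real.exp (3 / 2), fun r hr => ?_⟩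
  have hpow : (1 + r) ^ N ≤ N.factorial * Real.exp (1 + r) := by
    have := Real.pow_div_factorial_le_exp (1 + r) (by linarith) N
    rwa [div_le_iff₀ (by positivity), mul_comm] at this
  calc (1 + r) ^ N * Real.exp (-(r ^ 2 / 2))
      ≤ N.factorial * Real.exp (1 + r) * Real.exp (-(r ^ 2 / 2)) := by gcongr
    _ = N.factorial * Real.exp (1 + r + -(r ^ 2 / 2)) := by rw [Real.exp_add (1 + r), mul_assoc]
    _ ≤ N.factorial * Real.exp (3 / 2) := by
        gcongr
        nlinarith [sq_nonneg (r - 1)]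

theorem norm_iteratedFDeriv_exp_neg (i : ℕ) (t : ℝ) :
    ‖iteratedFDeriv ℝ i (fun t : ℝ => Real.exp (-t)) t‖ = Real.exp (-t) := by
  have hfun : (fun t : ℝ => Real.exp (-t)) = fun t => Real.exp (-1 * t) := by simp
  rw [norm_iteratedFDeriv_eq_norm_iteratedDeriv, hfun, iteratedDeriv_exp_const_mul]
  simp

theorem exists_norm_iteratedFDeriv_exp_neg_comp_le {E : Type*}
    [NormedAddCommGroup E] [NormedSpace ℝ E] {f : E → ℝ} (hf : f.HasTemperateGrowth) (m : ℕ) :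
    ∃ p : ℕ, ∃ C : ℝ, 0 ≤ C ∧ ∀ x,
      ‖iteratedFDeriv ℝ m (fun z => Real.exp (-f z)) x‖ ≤
        C * (1 + ‖x‖) ^ p * Real.exp (-f x) := by
  obtain ⟨p, C, hC, hfC⟩ := hf.norm_iteratedFDeriv_le_uniform m
  refine ⟨p * m, m.factorial * (C + 1) ^ m, by positivity, fun x => ?_⟩
  have hone : 1 ≤ (C + 1) * (1 + ‖x‖) ^ p :=
    one_le_mul_of_one_le_of_one_le (by linarith) (one_le_pow₀ (by linarith [norm_nonneg x]))
  have hderiv : ∀ i, 1 ≤ i → i ≤ m →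
      ‖iteratedFDeriv ℝ i f x‖ ≤ ((C + 1) * (1 + ‖x‖) ^ p) ^ i := fun i hi him =>
    calc ‖iteratedFDeriv ℝ i f x‖ ≤ C * (1 + ‖x‖) ^ p := hfC i him x
      _ ≤ (C + 1) * (1 + ‖x‖) ^ p := by gcongr; linarith
      _ ≤ ((C + 1) * (1 + ‖x‖) ^ p) ^ i := le_self_pow₀ hone (by omega)
  refine (norm_iteratedFDeriv_comp_le (g := fun t : ℝ => Real.exp (-t)) (by fun_prop) hf.1
    (by exact_mod_cast le_top) x
    (fun i _ => (norm_iteratedFDeriv_exp_neg i _).le) hderiv).trans_eq ?_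
  rw [mul_pow, ← pow_mul]
  ring

variable {E : Type*} [NormedAddCommGroup E] [InnerProductSpace ℝ E]

variable (E) in
/-- The Gaussian `exp (-‖z‖² / 2)` as a Schwartz function; unlike `exp (-‖z‖²)`, it satisfies
`∇φ = -zφ` without a factor. -/
def gaussianSchwartz : 𝓢(E, ℝ) where
  toFun z := Real.exp (-(‖z‖ ^ 2 / 2))
  smooth' := ((contDiff_norm_sq ℝ).div_const 2).neg.exp
  decay' k m := by
    have hq : (fun z : E => ‖z‖ ^ 2 / 2).HasTemperateGrowth := by
      simp only [div_eq_mul_inv]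
      exact (Function.hasTemperateGrowth_norm_sq E).mul (.const _)
    obtain ⟨p, C, hC, hderiv⟩ := exists_norm_iteratedFDeriv_exp_neg_comp_le hq m
    obtain ⟨B, hB⟩ := exists_one_add_pow_mul_exp_neg_sq_le (k + p)
    refine ⟨C * B, fun x => ?_⟩
    calc ‖x‖ ^ k * _
        ≤ (1 + ‖x‖) ^ k * (C * (1 + ‖x‖) ^ p * Real.exp (-(‖x‖ ^ 2 / 2))) := by
          gcongr
          · linarith
          · exact hderiv x
      _ = C * ((1 + ‖x‖) ^ (k + p) * Real.exp (-(‖x‖ ^ 2 / 2))) := by ring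
      _ ≤ C * B := by gcongr; exact hB _ (norm_nonneg x)

theorem gaussianSchwartz_apply (z : E) :
    gaussianSchwartz E z = Real.exp (-(‖z‖ ^ 2 / 2)) := rfl

theorem lineDerivOp_gaussianSchwartz (m z : E) :
    ∂_{m} (gaussianSchwartz E) z = -(inner ℝ z m * gaussianSchwartz E z) := by
  have h : HasFDerivAt (gaussianSchwartz E) _ z :=
    ((hasStrictFDerivAt_norm_sq z).hasFDerivAt.mul_const (2⁻¹ : ℝ)).neg.exp
  rw [SchwartzMap.lineDerivOp_apply_eq_fderiv, h.fderiv]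
  simp [gaussianSchwartz_apply, div_eq_mul_inv, mul_comm]

theorem integral_gaussianSchwartz_pos [FiniteDimensional ℝ E] [MeasurableSpace E] [BorelSpace E] :
    0 < ∫ z, gaussianSchwartz E z := by
  have hfun : ∀ z, gaussianSchwartz E z = Real.exp (-(1 / 2) * ‖z‖ ^ 2) := fun z => by
    rw [gaussianSchwartz_apply]
    ring_nf
  simp only [hfun, GaussianFourier.integral_rexp_neg_mul_sq_norm one_half_pos]
  positivity

end Gaussian

section Derivatives

variable {E F G : Type*} [NormedAddCommGroup E] [NormedAddCommGroup F] [NormedSpace ℝ F]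
  [NormedAddCommGroup G] [NormedSpace ℝ G]

theorem lineDerivOp_comm [NormedSpace ℝ E] (m m' : E) (g : 𝓢(E, F)) :
    ∂_{m} (∂_{m'} g) = ∂_{m'} (∂_{m} g) := by
  have hsecond : ∀ (a b x : E), ∂_{a} (∂_{b} g) x = fderiv ℝ (fderiv ℝ g) x a b := fun a b x => by
    have hd : DifferentiableAt ℝ (fderiv ℝ g) x :=
      (SchwartzMap.fderivCLM ℝ E F g).differentiableAt
    change fderiv ℝ (fun y => fderiv ℝ g y b) x a = _
    simp [fderiv_clm_apply hd (differentiableAt_const b)]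
  ext x
  rw [hsecond, hsecond]
  exact (g.contDiffAt 2).isSymmSndFDerivAt (by simp) m m'

theorem lineDerivOp_postcompCLM [NormedSpace ℝ E] (L : F →L[ℝ] G) (m : E) (g : 𝓢(E, F)) :
    ∂_{m} (SchwartzMap.postcompCLM L g) = SchwartzMap.postcompCLM L (∂_{m} g) := by
  ext x
  exact congrArg (· m) (L.hasFDerivAt.comp x (g.hasFDerivAt x)).fderiv

theorem inner_lineDerivOp [NormedSpace ℝ E] {F : Type*} [NormedAddCommGroup F]
    [InnerProductSpace ℝ F] (y : F) (m x : E) (u : 𝓢(E, F)) :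
    inner ℝ y (∂_{m} u x) = ∂_{m} (SchwartzMap.postcompCLM (innerSL ℝ y) u) x := by
  rw [lineDerivOp_postcompCLM]
  rfl

variable [InnerProductSpace ℝ E]

theorem fderiv_apply_eq_sum {ι : Type*} [Fintype ι] (b : OrthonormalBasis ι ℝ E) (g : 𝓢(E, F))
    (x w : E) : fderiv ℝ g x w = ∑ i, inner ℝ (b i) w • ∂_{b i} g x := by
  conv_lhs => rw [← b.sum_repr' w]
  simp [SchwartzMap.lineDerivOp_apply_eq_fderiv]

theorem fderivCLM_eq_sum {ι : Type*} [Fintype ι] (b : OrthonormalBasis ι ℝ E) (g : 𝓢(E, F)) :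
    SchwartzMap.fderivCLM ℝ E F g = ∑ i, SchwartzMap.postcompCLM
      (ContinuousLinearMap.smulRightL ℝ E F (innerSL ℝ (b i))) (∂_{b i} g) := by
  ext x w
  simp [SchwartzMap.fderivCLM_apply, SchwartzMap.postcompCLM_apply, fderiv_apply_eq_sum b]

variable [FiniteDimensional ℝ E]

theorem laplacian_lineDerivOp (m : E) (g : 𝓢(E, F)) : Δ (∂_{m} g) = ∂_{m} (Δ g) := by
  simp only [SchwartzMap.laplacian_eq_sum (stdOrthonormalBasis ℝ E), lineDerivOp_sum]
  refine Finset.sum_congr rfl fun i _ => ?_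
  rw [lineDerivOp_comm _ m, lineDerivOp_comm _ m]

theorem laplacian_postcompCLM (L : F →L[ℝ] G) (g : 𝓢(E, F)) :
    Δ (SchwartzMap.postcompCLM L g) = SchwartzMap.postcompCLM L (Δ g) := by
  simp only [SchwartzMap.laplacian_eq_sum (stdOrthonormalBasis ℝ E), lineDerivOp_postcompCLM,
    map_sum]

theorem laplacian_sum {ι : Type*} (t : Finset ι) (g : ι → 𝓢(E, F)) :
    Δ (∑ i ∈ t, g i) = ∑ i ∈ t, Δ (g i) := by
  simp only [← SchwartzMap.laplacianCLM_eq ℝ, map_sum]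

theorem laplacian_fderivCLM (g : 𝓢(E, F)) :
    Δ (SchwartzMap.fderivCLM ℝ E F g) = SchwartzMap.fderivCLM ℝ E F (Δ g) := by
  simp only [fderivCLM_eq_sum (stdOrthonormalBasis ℝ E), laplacian_sum, laplacian_postcompCLM,
    laplacian_lineDerivOp]

end Derivatives

section DilatedAverage

variable {E F G : Type*} [NormedAddCommGroup E] [InnerProductSpace ℝ E] [FiniteDimensional ℝ E]
  [MeasurableSpace E] [BorelSpace E]
  [NormedAddCommGroup F] [NormedSpace ℝ F] [NormedAddCommGroup G] [NormedSpace ℝ G]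

theorem integrable_smul_dilated (φ : 𝓢(E, ℝ)) (s : ℝ) (x : E) (g : 𝓢(E, F)) :
    Integrable fun z => φ z • g (x + s • z) :=
  φ.integrable.smul_bdd (supNorm g) (by fun_prop : Continuous _).aestronglyMeasurable
    (.of_forall fun _ => norm_le_supNorm g _)

/-- The average `∫ φ(z) g(x + s z) dz` of `g` around `x` at scale `s`, with weight `φ`, as a linear
function of `g`. -/
def dilatedAverage (φ : 𝓢(E, ℝ)) (s : ℝ) (x : E) : 𝓢(E, F) →ₗ[ℝ] F where
  toFun g := ∫ z, φ z • g (x + s • z)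
  map_add' g h := by
    rw [← integral_add (integrable_smul_dilated φ s x g) (integrable_smul_dilated φ s x h)]
    simp
  map_smul' c g := by
    rw [RingHom.id_apply, ← integral_smul]
    simp [smul_comm c]

theorem dilatedAverage_apply (φ : 𝓢(E, ℝ)) (s : ℝ) (x : E) (g : 𝓢(E, F)) :
    dilatedAverage φ s x g = ∫ z, φ z • g (x + s • z) := rfl

theorem dilatedAverage_zero_scale [CompleteSpace F] (φ : 𝓢(E, ℝ)) (x : E) (g : 𝓢(E, F)) :
    dilatedAverage φ 0 x g = (∫ z, φ z) • g x := by
  simp [dilatedAverage_apply, integral_smul_const]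

theorem norm_dilatedAverage_le (φ : 𝓢(E, ℝ)) (s : ℝ) (x : E) (g : 𝓢(E, F)) :
    ‖dilatedAverage φ s x g‖ ≤ (∫ z, ‖φ z‖) * supNorm g := by
  have hφ : Integrable φ volume := φ.integrable
  rw [dilatedAverage_apply, ← integral_mul_const]
  refine norm_integral_le_of_norm_le (hφ.norm.mul_const _) (.of_forall fun z => ?_)
  rw [norm_smul]
  gcongr
  exact norm_le_supNorm g _

theorem dilatedAverage_postcompCLM [CompleteSpace F] [CompleteSpace G] (φ : 𝓢(E, ℝ)) (s : ℝ)
    (x : E) (L : F →L[ℝ] G) (g : 𝓢(E, F)) :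
    dilatedAverage φ s x (SchwartzMap.postcompCLM L g) = L (dilatedAverage φ s x g) := by
  rw [dilatedAverage_apply, dilatedAverage_apply,
    ← L.integral_comp_comm (integrable_smul_dilated φ s x g)]
  simp [SchwartzMap.postcompCLM_apply]

theorem smul_dilatedAverage_lineDerivOp (φ : 𝓢(E, ℝ)) (s : ℝ) (x m : E) (g : 𝓢(E, F)) :
    s • dilatedAverage φ s x (∂_{m} g) = -dilatedAverage (∂_{m} φ) s x g := by
  have hdilated : ∀ z, HasLineDerivAt ℝ (fun z => g (x + s • z)) (s • ∂_{m} g (x + s • z)) z m :=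
    fun z => by
      have h : HasFDerivAt (fun z : E => x + s • z) (s • ContinuousLinearMap.id ℝ E) z :=
        ((hasFDerivAt_id z).const_smul s).const_add x
      simpa [Function.comp_def, SchwartzMap.lineDerivOp_apply_eq_fderiv] using
        ((g.hasFDerivAt (x + s • z)).comp z h).hasLineDerivAt m
  rw [← map_smul]
  exact integral_bilinear_hasLineDerivAt_right_eq_neg_left_of_integrable
    (B := ContinuousLinearMap.lsmul ℝ ℝ) (integrable_smul_dilated (∂_{m} φ) s x g)
    (integrable_smul_dilated φ s x (s • ∂_{m} g)) (integrable_smul_dilated φ s x g)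
    (fun z _ => (φ.hasFDerivAt z).hasLineDerivAt m) (fun z _ => hdilated z)

theorem hasDerivAt_dilatedAverage (φ : 𝓢(E, ℝ)) (s : ℝ) (x : E) (g : 𝓢(E, F)) :
    HasDerivAt (fun s => dilatedAverage φ s x g)
      (∫ z, φ z • fderiv ℝ g (x + s • z) z) s := by
  set g' : 𝓢(E, E →L[ℝ] F) := SchwartzMap.fderivCLM ℝ E F g
  refine (hasDerivAt_integral_of_dominated_loc_of_deriv_le (s := Set.univ)
    (bound := fun z => supNorm g' * (‖z‖ ^ 1 * ‖φ z‖))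
    (F' := fun s z => φ z • g' (x + s • z) z)
    univ_mem (.of_forall fun s => (integrable_smul_dilated φ s x g).aestronglyMeasurable)
    (integrable_smul_dilated φ s x g) ?_ ?_ ((φ.integrable_pow_mul volume 1).const_mul _) ?_).2
  · exact (by fun_prop : Continuous fun z => φ z • g' (x + s • z) z).aestronglyMeasurable
  · refine .of_forall fun z t _ => ?_
    calc ‖φ z • g' (x + t • z) z‖ ≤ ‖φ z‖ * (‖g' (x + t • z)‖ * ‖z‖) := by
          rw [norm_smul]
          gcongr
          exact ContinuousLinearMap.le_opNorm _ _
      _ ≤ ‖φ z‖ * (supNorm g' * ‖z‖) := by gcongr; exact norm_le_supNorm g' _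
      _ = supNorm g' * (‖z‖ ^ 1 * ‖φ z‖) := by ring
  · refine .of_forall fun z t _ => ?_
    have hline : HasDerivAt (fun t : ℝ => x + t • z) z t := by
      simpa using ((hasDerivAt_id t).smul_const z).const_add x
    exact ((g.hasFDerivAt (x + t • z)).comp_hasDerivAt t hline).const_smul (φ z)

-- As `∇φ = -zφ` for the Gaussian `φ`, the factor `z` produced by `d/ds` is a derivative of `φ`,
-- which an integration by parts moves back onto `g`.
theorem hasDerivAt_dilatedAverage_gaussianSchwartz (s : ℝ) (x : E) (g : 𝓢(E, F)) :
    HasDerivAt (fun s => dilatedAverage (gaussianSchwartz E) s x g)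
      (s • dilatedAverage (gaussianSchwartz E) s x (Δ g)) s := by
  set b := stdOrthonormalBasis ℝ E
  set φ := gaussianSchwartz E
  have hintegrand : ∀ z, φ z • fderiv ℝ g (x + s • z) z =
      -∑ i, ∂_{b i} φ z • ∂_{b i} g (x + s • z) := fun z => by
    simp only [fderiv_apply_eq_sum b, φ, lineDerivOp_gaussianSchwartz, Finset.smul_sum, neg_smul,
      Finset.sum_neg_distrib, neg_neg, smul_smul, mul_comm, real_inner_comm]
  refine (hasDerivAt_dilatedAverage φ s x g).congr_deriv ?_
  calc ∫ z, φ z • fderiv ℝ g (x + s • z) z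
      = -∑ i, dilatedAverage (∂_{b i} φ) s x (∂_{b i} g) := by
        simp only [hintegrand, dilatedAverage_apply]
        rw [integral_neg, integral_finsetSum _ fun i _ => integrable_smul_dilated _ s x _]
    _ = s • dilatedAverage φ s x (Δ g) := by
        simp only [SchwartzMap.laplacian_eq_sum b, map_sum, Finset.smul_sum,
          smul_dilatedAverage_lineDerivOp, Finset.sum_neg_distrib]

theorem hasDerivAt_dilatedAverage_gaussianSchwartz_sub (s : ℝ) (x : E) (g : 𝓢(E, F)) :
    HasDerivAt (fun s => dilatedAverage (gaussianSchwartz E) s x g -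
        (s ^ 2 / 2) • dilatedAverage (gaussianSchwartz E) s x (Δ g))
      (-((s ^ 3 / 2) • dilatedAverage (gaussianSchwartz E) s x (Δ (Δ g)))) s := by
  refine ((hasDerivAt_dilatedAverage_gaussianSchwartz s x g).sub
    (((hasDerivAt_pow 2 s).div_const 2).smul
      (hasDerivAt_dilatedAverage_gaussianSchwartz s x (Δ g)))).congr_deriv ?_
  push_cast
  module

end DilatedAverage

section DilationOrder

variable {E F G H : Type*} [NormedAddCommGroup E] [InnerProductSpace ℝ E] [FiniteDimensional ℝ E]
  [MeasurableSpace E] [BorelSpace E] [NormedAddCommGroup F] [NormedSpace ℝ F]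
  [NormedAddCommGroup G] [NormedSpace ℝ G] [NormedAddCommGroup H] [NormedSpace ℝ H]

/-- `P` costs at most `k` powers of the scale: averages of `P g` at scale `s` are bounded by a
multiple of `s⁻ᵏ ‖g‖_{L^∞}`, uniformly in the centre. A differential operator of order `k` with
constant coefficients has this property. The inequality is multiplied by `sᵏ` to include `s = 0`. -/
def HasDilationOrder (k : ℕ) (P : 𝓢(E, F) → 𝓢(E, G)) : Prop :=
  ∀ φ : 𝓢(E, ℝ), ∃ K : ℝ≥0, ∀ (s : ℝ) (x : E) (g : 𝓢(E, F)),
    ‖s ^ k • dilatedAverage φ s x (P g)‖ ≤ K * supNorm g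

namespace HasDilationOrder

variable {k : ℕ} {P Q : 𝓢(E, F) → 𝓢(E, G)}

protected theorem id : HasDilationOrder 0 (fun g : 𝓢(E, F) => g) := fun φ => by
  refine ⟨(∫ z, ‖φ z‖).toNNReal, fun s x g => ?_⟩
  rw [pow_zero, one_smul, Real.coe_toNNReal _ (integral_nonneg fun _ => norm_nonneg _)]
  exact norm_dilatedAverage_le φ s x g

theorem lineDerivOp (hP : HasDilationOrder k P) (m : E) :
    HasDilationOrder (k + 1) fun g => ∂_{m} (P g) := fun φ => by
  obtain ⟨K, hK⟩ := hP (∂_{m} φ)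
  refine ⟨K, fun s x g => ?_⟩
  rw [pow_succ, mul_smul, smul_dilatedAverage_lineDerivOp, smul_neg, norm_neg]
  exact hK s x g

theorem postcompCLM [CompleteSpace G] [CompleteSpace H] (hP : HasDilationOrder k P)
    (L : G →L[ℝ] H) : HasDilationOrder k fun g => SchwartzMap.postcompCLM L (P g) := fun φ => by
  obtain ⟨K, hK⟩ := hP φ
  refine ⟨‖L‖₊ * K, fun s x g => ?_⟩
  rw [dilatedAverage_postcompCLM, ← map_smul]
  calc _ ≤ ‖L‖ * ‖s ^ k • dilatedAverage φ s x (P g)‖ := L.le_opNorm _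
    _ ≤ ‖L‖ * (K * supNorm g) := by gcongr; exact hK s x g
    _ = (‖L‖₊ * K : ℝ≥0) * supNorm g := by push_cast; ring

theorem const_smul (hP : HasDilationOrder k P) (c : ℝ) :
    HasDilationOrder k fun g => c • P g := fun φ => by
  obtain ⟨K, hK⟩ := hP φ
  refine ⟨‖c‖₊ * K, fun s x g => ?_⟩
  rw [map_smul, smul_comm, norm_smul, NNReal.coe_mul, coe_nnnorm, mul_assoc]
  gcongr
  exact hK s x g

theorem sub (hP : HasDilationOrder k P) (hQ : HasDilationOrder k Q) :
    HasDilationOrder k fun g => P g - Q g := fun φ => by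
  obtain ⟨K, hK⟩ := hP φ
  obtain ⟨K', hK'⟩ := hQ φ
  refine ⟨K + K', fun s x g => ?_⟩
  rw [map_sub, smul_sub, NNReal.coe_add, add_mul]
  exact (norm_sub_le _ _).trans (add_le_add (hK s x g) (hK' s x g))

theorem sum {ι : Type*} {t : Finset ι} {P : ι → 𝓢(E, F) → 𝓢(E, G)}
    (hP : ∀ i ∈ t, HasDilationOrder k (P i)) :
    HasDilationOrder k fun g => ∑ i ∈ t, P i g := fun φ => by
  choose! K hK using fun i hi => hP i hi φ
  refine ⟨∑ i ∈ t, K i, fun s x g => ?_⟩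
  rw [map_sum, Finset.smul_sum, NNReal.coe_sum, Finset.sum_mul]
  exact norm_sum_le_of_le t fun i hi => hK i hi s x g

theorem laplacian (hP : HasDilationOrder k P) : HasDilationOrder (k + 2) fun g => Δ (P g) := by
  simp only [SchwartzMap.laplacian_eq_sum (stdOrthonormalBasis ℝ E)]
  exact .sum fun i _ => (hP.lineDerivOp _).lineDerivOp _

theorem fderivCLM [CompleteSpace G] (hP : HasDilationOrder k P) :
    HasDilationOrder (k + 1) fun g => SchwartzMap.fderivCLM ℝ E G (P g) := by
  simp only [fderivCLM_eq_sum (stdOrthonormalBasis ℝ E)]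
  exact .sum fun i _ => (hP.lineDerivOp _).postcompCLM _

end HasDilationOrder

end DilationOrder

section Interpolation

variable {E F G H : Type*} [NormedAddCommGroup E] [InnerProductSpace ℝ E] [FiniteDimensional ℝ E]
  [MeasurableSpace E] [BorelSpace E] [NormedAddCommGroup F] [NormedSpace ℝ F]
  [NormedAddCommGroup G] [NormedSpace ℝ G]
  [NormedAddCommGroup H] [NormedSpace ℝ H]

theorem HasDilationOrder.exists_norm_dilatedAverage_sub_le {P : 𝓢(E, F) → 𝓢(E, G)}
    (hP : HasDilationOrder 1 P) (φ : 𝓢(E, ℝ)) :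
    ∃ K : ℝ≥0, ∀ (u : 𝓢(E, F)) (x : E) (R : ℝ), 0 < R →
      ‖dilatedAverage φ R x (P u) - (R ^ 2 / 2) • dilatedAverage φ R x (Δ (P u))‖ ≤
        K * (supNorm u / R) := by
  obtain ⟨K₁, hK₁⟩ := hP φ
  obtain ⟨K₃, hK₃⟩ := (hP.laplacian.const_smul 2⁻¹) φ
  refine ⟨K₁ + K₃, fun u x R hR => ?_⟩
  rw [mul_div_assoc', le_div_iff₀' hR]
  calc R * ‖dilatedAverage φ R x (P u) - (R ^ 2 / 2) • dilatedAverage φ R x (Δ (P u))‖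
      = ‖R ^ 1 • dilatedAverage φ R x (P u) -
          R ^ 3 • dilatedAverage φ R x ((2⁻¹ : ℝ) • Δ (P u))‖ := by
        rw [← norm_smul_of_nonneg hR.le, map_smul]
        congr 1
        module
    _ ≤ K₁ * supNorm u + K₃ * supNorm u := norm_sub_le_of_le (hK₁ R x u) (hK₃ R x u)
    _ = (K₁ + K₃ : ℝ≥0) * supNorm u := by rw [NNReal.coe_add, add_mul]

variable [CompleteSpace G]

theorem norm_integral_gaussianSchwartz_smul_le {x : E} {w : 𝓢(E, G)} {K : ℝ}
    (hK : ∀ s : ℝ, ‖s ^ 3 • dilatedAverage (gaussianSchwartz E) s x (Δ (Δ w))‖ ≤ K)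
    {R : ℝ} (hR : 0 ≤ R) :
    ‖(∫ z, gaussianSchwartz E z) • w x‖ ≤
      ‖dilatedAverage (gaussianSchwartz E) R x w -
        (R ^ 2 / 2) • dilatedAverage (gaussianSchwartz E) R x (Δ w)‖ + K * R := by
  set B : ℝ → G := fun s => dilatedAverage (gaussianSchwartz E) s x w -
    (s ^ 2 / 2) • dilatedAverage (gaussianSchwartz E) s x (Δ w) with hB
  have hB0 : B 0 = (∫ z, gaussianSchwartz E z) • w x := by
    simp [hB, dilatedAverage_zero_scale]
  have hderiv : ∀ s, ‖-((s ^ 3 / 2) •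
      dilatedAverage (gaussianSchwartz E) s x (Δ (Δ w)))‖ ≤ K := fun s => by
    rw [norm_neg, div_eq_inv_mul, mul_smul, norm_smul_of_nonneg (by norm_num)]
    linarith [hK s, norm_nonneg (s ^ 3 • dilatedAverage (gaussianSchwartz E) s x (Δ (Δ w)))]
  have hmean : ‖B 0 - B R‖ ≤ K * ‖0 - R‖ :=
    convex_univ.norm_image_sub_le_of_norm_hasDerivWithin_le
      (fun s _ => (hasDerivAt_dilatedAverage_gaussianSchwartz_sub s x w).hasDerivWithinAt)
      (fun s _ => hderiv s) (Set.mem_univ R) (Set.mem_univ 0)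
  rw [zero_sub, norm_neg, Real.norm_of_nonneg hR] at hmean
  rw [← hB0]
  linarith [norm_le_norm_add_norm_sub' (B 0) (B R)]

theorem exists_norm_le_supNorm_div_add_mul_supNorm {P : 𝓢(E, F) → 𝓢(E, G)}
    {T : 𝓢(E, H) → 𝓢(E, G)} (hP : HasDilationOrder 1 P) (hT : HasDilationOrder 3 T) :
    ∃ C : ℝ≥0, ∀ (u : 𝓢(E, F)) (f : 𝓢(E, H)), Δ (Δ (P u)) = T f → ∀ (x : E) (R : ℝ), 0 < R →
      ‖P u x‖ ≤ C * (supNorm u / R + R * supNorm f) := by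
  obtain ⟨K, hK⟩ := hP.exists_norm_dilatedAverage_sub_le (gaussianSchwartz E)
  obtain ⟨L, hL⟩ := hT (gaussianSchwartz E)
  have hc := integral_gaussianSchwartz_pos (E := E)
  set c := ∫ z, gaussianSchwartz E z
  refine ⟨(K + L) / c.toNNReal, fun u f huf x R hR => ?_⟩
  have hu := div_nonneg (supNorm_nonneg u) hR.le
  have hf := mul_nonneg hR.le (supNorm_nonneg f)
  rw [NNReal.coe_div, NNReal.coe_add, Real.coe_toNNReal c hc.le, div_mul_eq_mul_div,
    le_div_iff₀' hc]
  calc c * ‖P u x‖ = ‖c • P u x‖ := (norm_smul_of_nonneg hc.le _).symm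
    _ ≤ K * (supNorm u / R) + L * supNorm f * R :=
        (norm_integral_gaussianSchwartz_smul_le (fun s => huf ▸ hL s x f) hR.le).trans
          (by gcongr; exact hK u x R hR)
    _ ≤ (K + L) * (supNorm u / R + R * supNorm f) := by
        linarith [mul_nonneg K.coe_nonneg hf, mul_nonneg L.coe_nonneg hu]

theorem exists_supNorm_le_mul_sqrt_mul_sqrt {P : 𝓢(E, F) → 𝓢(E, G)}
    {T : 𝓢(E, H) → 𝓢(E, G)} (hP : HasDilationOrder 1 P) (hT : HasDilationOrder 3 T) :
    ∃ C : ℝ≥0, ∀ (u : 𝓢(E, F)) (f : 𝓢(E, H)), Δ (Δ (P u)) = T f →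
      supNorm (P u) ≤ C * (√(supNorm u) * √(supNorm f)) := by
  obtain ⟨C, hC⟩ := exists_norm_le_supNorm_div_add_mul_supNorm hP hT
  refine ⟨2 * C, fun u f huf => supNorm_le (by positivity) fun x => ?_⟩
  rw [NNReal.coe_mul, NNReal.coe_ofNat]
  refine le_mul_of_forall_le_div_add_mul C.2 (Real.sqrt_nonneg _) (Real.sqrt_nonneg _)
    fun R hR => ?_
  rw [Real.sq_sqrt (supNorm_nonneg u), Real.sq_sqrt (supNorm_nonneg f)]
  exact hC u f huf x R hR

end Interpolation

section Lame

variable {E : Type*} [NormedAddCommGroup E] [InnerProductSpace ℝ E] [FiniteDimensional ℝ E]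

variable (E) in
/-- The inverse of the Riesz isomorphism `E ≃ E*`, typed as a linear map instead of a
conjugate-linear one. -/
def rieszCLM : (E →L[ℝ] ℝ) →L[ℝ] E where
  toFun := (InnerProductSpace.toDual ℝ E).symm
  map_add' := map_add _
  map_smul' := map_smulₛₗ _
  cont := LinearIsometryEquiv.continuous _

variable (E) in
/-- The gradient of scalar Schwartz functions. -/
def schwartzGrad : 𝓢(E, ℝ) →L[ℝ] 𝓢(E, E) :=
  SchwartzMap.postcompCLM (rieszCLM E) ∘L SchwartzMap.fderivCLM ℝ E ℝ

variable (E) in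
/-- The divergence of Schwartz vector fields, as the trace of the Jacobian. -/
def schwartzDiv : 𝓢(E, E) →L[ℝ] 𝓢(E, ℝ) :=
  SchwartzMap.postcompCLM (LinearMap.toContinuousLinearMap
    (LinearMap.trace ℝ E ∘ₗ ContinuousLinearMap.coeLM ℝ)) ∘L SchwartzMap.fderivCLM ℝ E E

theorem inner_schwartzGrad (p : 𝓢(E, ℝ)) (m x : E) :
    inner ℝ m (schwartzGrad E p x) = ∂_{m} p x := by
  rw [real_inner_comm]
  exact InnerProductSpace.toDual_symm_apply (𝕜 := ℝ)

theorem schwartzDiv_apply {ι : Type*} [Fintype ι] (b : OrthonormalBasis ι ℝ E) (u : 𝓢(E, E))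
    (x : E) : schwartzDiv E u x = ∑ i, inner ℝ (b i) (∂_{b i} u x) :=
  LinearMap.trace_eq_sum_inner _ b

theorem laplacian_schwartzGrad (p : 𝓢(E, ℝ)) : Δ (schwartzGrad E p) = schwartzGrad E (Δ p) := by
  simp [schwartzGrad, laplacian_postcompCLM, laplacian_fderivCLM]

theorem laplacian_schwartzDiv (u : 𝓢(E, E)) : Δ (schwartzDiv E u) = schwartzDiv E (Δ u) := by
  simp [schwartzDiv, laplacian_postcompCLM, laplacian_fderivCLM]

theorem schwartzDiv_schwartzGrad (p : 𝓢(E, ℝ)) : schwartzDiv E (schwartzGrad E p) = Δ p := by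
  have hcomponent : ∀ m, SchwartzMap.postcompCLM (innerSL ℝ m) (schwartzGrad E p) = ∂_{m} p :=
    fun m => SchwartzMap.ext (inner_schwartzGrad p m)
  ext x
  simp only [schwartzDiv_apply (stdOrthonormalBasis ℝ E), inner_lineDerivOp, hcomponent,
    SchwartzMap.laplacian_eq_sum (stdOrthonormalBasis ℝ E), sum_apply]

/-- The Lamé operator on Schwartz vector fields. -/
def schwartzLame (μ lam : ℝ) (u : 𝓢(E, E)) : 𝓢(E, E) :=
  μ • Δ u + (lam + μ) • schwartzGrad E (schwartzDiv E u)

variable {μ lam : ℝ}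

theorem schwartzDiv_schwartzLame (u : 𝓢(E, E)) :
    schwartzDiv E (schwartzLame μ lam u) = (lam + 2 * μ) • Δ (schwartzDiv E u) := by
  rw [schwartzLame, map_add, map_smul, map_smul, schwartzDiv_schwartzGrad, laplacian_schwartzDiv]
  module

theorem smul_laplacian_laplacian_eq (u : 𝓢(E, E)) :
    (μ * (lam + 2 * μ)) • Δ (Δ u) = (lam + 2 * μ) • Δ (schwartzLame μ lam u) -
      (lam + μ) • schwartzGrad E (schwartzDiv E (schwartzLame μ lam u)) := by
  have hlap : Δ (schwartzLame μ lam u) =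
      μ • Δ (Δ u) + (lam + μ) • schwartzGrad E (Δ (schwartzDiv E u)) := by
    rw [← laplacian_schwartzGrad]
    simp only [schwartzLame, ← SchwartzMap.laplacianCLM_eq ℝ, map_add, map_smul]
  rw [hlap, schwartzDiv_schwartzLame, map_smul]
  module

theorem exists_supNorm_fderivCLM_le_schwartzLame [MeasurableSpace E] [BorelSpace E] (hμ : μ ≠ 0)
    (hν : lam + 2 * μ ≠ 0) :
    ∃ C : ℝ≥0, ∀ u : 𝓢(E, E), supNorm (SchwartzMap.fderivCLM ℝ E E u) ≤
      C * (√(supNorm u) * √(supNorm (schwartzLame μ lam u))) := by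
  have hgrad : HasDilationOrder 2 fun f : 𝓢(E, E) => schwartzGrad E (schwartzDiv E f) :=
    (((HasDilationOrder.id.fderivCLM).postcompCLM _).fderivCLM).postcompCLM _
  obtain ⟨C, hC⟩ := exists_supNorm_le_mul_sqrt_mul_sqrt (HasDilationOrder.id (E := E)).fderivCLM
    (((HasDilationOrder.id.laplacian.const_smul (lam + 2 * μ)).sub
      (hgrad.const_smul (lam + μ))).const_smul (μ * (lam + 2 * μ))⁻¹).fderivCLM
  refine ⟨C, fun u => hC u (schwartzLame μ lam u) ?_⟩
  rw [← smul_laplacian_laplacian_eq, inv_smul_smul₀ (mul_ne_zero hμ hν), laplacian_fderivCLM,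
    laplacian_fderivCLM]

theorem lame_eq_schwartzLame {n : ℕ} (v : 𝓢(En n, En n)) :
    lame μ lam v = schwartzLame μ lam v := by
  set e := EuclideanSpace.basisFun (Fin n) ℝ
  have hinner : ∀ (i : Fin n) (y : En n), inner ℝ (e i) y = y i := fun i y => by
    simp [e, EuclideanSpace.inner_single_left]
  have hpdv : ∀ (i : Fin n) (p : 𝓢(En n, ℝ)), pdv i p = ∂_{e i} p := fun i p => by
    ext x
    simp [e, pdv, SchwartzMap.lineDerivOp_apply_eq_fderiv]
  have hpdv_component : ∀ (i j : Fin n) (w : 𝓢(En n, En n)),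
      pdv i (fun z => w z j) = fun z => ∂_{e i} w z j := fun i j w => by
    ext x
    simp only [← hinner, inner_lineDerivOp, ← hpdv]
    rfl
  have hdiv : (fun y => ∑ j, pdv j (fun z => v z j) y) = schwartzDiv _ v := by
    ext y
    simp only [hpdv_component, schwartzDiv_apply e, hinner]
  have hlap : ∀ x i, ∑ j, pdv j (fun y => pdv j (fun z => v z i) y) x = Δ v x i := fun x i => by
    simp [hpdv_component, SchwartzMap.laplacian_eq_sum e, sum_apply]
  have hgrad : ∀ (p : 𝓢(En n, ℝ)) x i, pdv i p x = schwartzGrad _ p x i := fun p x i => by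
    rw [hpdv, ← inner_schwartzGrad, hinner]
  ext x i
  change μ * (∑ j, pdv j (fun y => pdv j (fun z => v z i) y) x) + (lam + μ) *
    pdv i (fun y => ∑ j, pdv j (fun z => v z j) y) x = _
  rw [hdiv, hlap, hgrad]
  rfl

end Lame

theorem gradient_linfty_interpolation_lame_general (n : ℕ) (μ lam : ℝ) (hμ : μ ≠ 0)
    (hν : lam + 2 * μ ≠ 0) :
    ∃ C : ℝ≥0, ∀ v : SchwartzMap (En n) (En n),
      eLpNorm (fun x => fderiv ℝ (⇑v) x) ⊤ volume ≤
        C * (eLpNorm (⇑v) ⊤ volume) ^ ((1 : ℝ) / 2) *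
          (eLpNorm (lame μ lam ⇑v) ⊤ volume) ^ ((1 : ℝ) / 2) := by
  obtain ⟨C, hC⟩ := exists_supNorm_fderivCLM_le_schwartzLame (E := En n) hμ hν
  refine ⟨C, fun v => ?_⟩
  change eLpNorm (SchwartzMap.fderivCLM ℝ (En n) (En n) v) ⊤ volume ≤ _
  simp only [lame_eq_schwartzLame, eLpNorm_top_eq_ofReal_supNorm]
  rw [ENNReal.ofReal_rpow_of_nonneg (supNorm_nonneg _) (by norm_num),
    ENNReal.ofReal_rpow_of_nonneg (supNorm_nonneg _) (by norm_num),
    ← Real.sqrt_eq_rpow, ← Real.sqrt_eq_rpow, ← ENNReal.ofReal_coe_nnreal, mul_assoc,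
    ← ENNReal.ofReal_mul (Real.sqrt_nonneg _), ← ENNReal.ofReal_mul C.coe_nonneg]
  exact ENNReal.ofReal_le_ofReal (hC v)

/-- Interpolation inequality: there exists `C = C(n,μ,λ)` such that every Schwartz
vector field `v : ℝⁿ → ℝⁿ` satisfies `‖∇v‖_{L^∞} ≤ C ‖v‖_{L^∞}^{1/2} ‖𝓛v‖_{L^∞}^{1/2}`,
where `∇v` is the Jacobian of `v`. -/
theorem gradient_linfty_interpolation_lame (n : ℕ) (hn : 1 ≤ n) (μ lam : ℝ)
    (hμ : 0 < μ) (hν : 0 < lam + 2 * μ) :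
    ∃ C : ℝ≥0, ∀ v : SchwartzMap (En n) (En n),
      eLpNorm (fun x => fderiv ℝ (⇑v) x) ⊤ volume ≤
        C * (eLpNorm (⇑v) ⊤ volume) ^ ((1 : ℝ) / 2) *
          (eLpNorm (lame μ lam ⇑v) ⊤ volume) ^ ((1 : ℝ) / 2) :=
  gradient_linfty_interpolation_lame_general n μ lam hμ.ne' hν.ne'
end
end

section
/- Let (X,‖·‖) be a real Banach space. Let A, with domain D(A) ⊆ X, generate a bounded analytic semigroup (T_A(t))_{t≥0} such that ‖T_A(t)x‖ → 0 as t → ∞ for every x ∈ X. Let B : X → X be a continuous linear bijection with continuous inverse B⁻¹, and assume that S := B∘A, with domain D(A), generates a bounded analytic semigroup (T_S(t))_{t≥0} such that ‖T_S(t)x‖ → 0 as t → ∞ for every x ∈ X. Then for every s ∈ (0,1) and q ∈ [1,∞] there exist constants c, C > 0, independent of x, such that for every x ∈ D(A): c · ‖ t ↦ t^{1−s}‖A(T_A(t)x)‖ ‖_{L^q((0,∞),dt/t)} ≤ ‖ t ↦ t^{1−s}‖S(T_S(t)x)‖ ‖_{L^q((0,∞),dt/t)} ≤ C · ‖ t ↦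 t^{1−s}‖A(T_A(t)x)‖ ‖_{L^q((0,∞),dt/t)}. -/
open MeasureTheory
open scoped ENNReal NNReal

noncomputable section

variable {X : Type*} [NormedAddCommGroup X] [NormedSpace ℝ X] [CompleteSpace X]

/-- `S`, a linear operator defined on the subspace `D ⊆ X`, generates the bounded
analytic semigroup `(T(t))_{t≥0}` with constants `M, C₀`. -/
structure IsBAS (D : Set X) (S : X → X) (T : ℝ → X →L[ℝ] X) (M C₀ : ℝ) : Prop where
  zero_mem : (0 : X) ∈ D
  add_mem : ∀ x ∈ D, ∀ y ∈ D, x + y ∈ D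
  smul_mem : ∀ (c : ℝ), ∀ x ∈ D, c • x ∈ D
  map_add : ∀ x ∈ D, ∀ y ∈ D, S (x + y) = S x + S y
  map_smul : ∀ (c : ℝ), ∀ x ∈ D, S (c • x) = c • S x
  T_zero : T 0 = ContinuousLinearMap.id ℝ X
  T_semigroup : ∀ t : ℝ, 0 ≤ t → ∀ s : ℝ, 0 ≤ s → T (t + s) = (T t).comp (T s)
  T_cont : ∀ x : X, ContinuousOn (fun t : ℝ => T t x) (Set.Ici 0)
  T_bdd : ∀ t : ℝ, 0 ≤ t → ∀ x : X, ‖T t x‖ ≤ M * ‖x‖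
  T_mem : ∀ x ∈ D, ∀ t : ℝ, 0 ≤ t → T t x ∈ D
  T_comm : ∀ x ∈ D, ∀ t : ℝ, 0 ≤ t → S (T t x) = T t (S x)
  T_deriv : ∀ x ∈ D, ∀ t : ℝ, 0 ≤ t →
    HasDerivWithinAt (fun τ : ℝ => T τ x) (T t (S x)) (Set.Ici 0) t
  analytic_mem : ∀ x : X, ∀ t : ℝ, 0 < t → T t x ∈ D
  analytic_bdd : ∀ x : X, ∀ t : ℝ, 0 < t → t * ‖S (T t x)‖ ≤ C₀ * ‖x‖

/-- The (extended-real-valued) seminorm `‖x‖_{Ḃˢ} = ∫₀^∞ t^{−s/2}‖S(T(t)x)‖ dt`. -/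
def BsNorm (S : X → X) (T : ℝ → X →L[ℝ] X) (s : ℝ) (x : X) : ℝ≥0∞ :=
  ∫⁻ t in Set.Ioi (0 : ℝ), ENNReal.ofReal (t ^ (-s / 2) * ‖S (T t x)‖)

/-- The (extended-real-valued) seminorm `‖x‖_{Ḃ⁻ˢ} = ∫₀^∞ t^{s/2−1}‖T(t)x‖ dt`. -/
def BnegNorm (T : ℝ → X →L[ℝ] X) (s : ℝ) (x : X) : ℝ≥0∞ :=
  ∫⁻ t in Set.Ioi (0 : ℝ), ENNReal.ofReal (t ^ (s / 2 - 1) * ‖T t x‖)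


/-- The measure `dt/t` on `(0,∞)`. -/
def mulHaar : Measure ℝ :=
  (volume.restrict (Set.Ioi (0 : ℝ))).withDensity fun t => ENNReal.ofReal t⁻¹

/-!
Split `x = (x - T_A(t)x) + T_A(t)x` before applying `S T_S(t)`. Analyticity of `T_S` controls the
first piece, and `S T_S(t) = T_S(t) S` with `‖S y‖ ≲ ‖A y‖` controls the second one:
`t‖S T_S(t)x‖ ≲ ‖x - T_A(t)x‖ + t‖A T_A(t)x‖`. Telescoping `x - T_A(t)x` along the times `2⁻ᵏt`
bounds the right-hand side by `∑ₖ 2⁻ᵏt‖A T_A(2⁻ᵏt)x‖`. After multiplication by `t⁻ˢ` the `k`-th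
term is a dilate of `t ↦ t^{1-s}‖A T_A(t)x‖` with weight `2⁻ˢᵏ`; since dilations preserve `dt/t` and
`∑ₖ 2⁻ˢᵏ < ∞`, Minkowski's inequality gives one estimate, and the other one follows by symmetry.
-/

open Filter Set Topology

theorem enorm_le_ofReal_mul_enorm {E F : Type*} [SeminormedAddGroup E] [SeminormedAddGroup F]
    {a : E} {b : F} {c : ℝ} (h : ‖a‖ ≤ c * ‖b‖) : ‖a‖ₑ ≤ ENNReal.ofReal c * ‖b‖ₑ := by
  rw [← ofReal_norm a, ← ofReal_norm b, ← ENNReal.ofReal_mul' (norm_nonneg b)]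
  exact ENNReal.ofReal_le_ofReal h

section LpNorm

variable {α ι : Type*} [MeasurableSpace α] {μ : Measure α} {p : ℝ≥0∞} [Countable ι]
  {f : ι → α → ℝ≥0∞}

theorem eLpNorm_iSup_of_directed (hf : ∀ i, AEMeasurable (f i) μ) (hdir : Directed (· ≤ ·) f) :
    eLpNorm (fun x => ⨆ i, f i x) p μ ≤ ⨆ i, eLpNorm (f i) p μ := by
  rcases eq_or_ne p 0 with rfl | hp0
  · simp
  rcases eq_or_ne p ∞ with rfl | hptop
  · simp only [eLpNorm_exponent_top, eLpNormEssSup, enorm_eq_self]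
    refine essSup_le_of_ae_le _ ?_
    filter_upwards [ae_all_iff.2 fun i => ENNReal.ae_le_essSup (f i)] with x hx
    exact iSup_mono hx
  have hp : 0 < p.toReal := ENNReal.toReal_pos hp0 hptop
  have rpow_iSup {r : ℝ} (hr : 0 < r) (v : ι → ℝ≥0∞) : (⨆ i, v i) ^ r = ⨆ i, v i ^ r :=
    (ENNReal.orderIsoRpow r hr).map_iSup v
  have hdir_rpow : Directed (· ≤ ·) fun i x => f i x ^ p.toReal :=
    hdir.mono_comp (g := fun h x => h x ^ p.toReal) _ fun g h hgh x =>
      ENNReal.rpow_le_rpow (hgh x) hp.le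
  simp only [eLpNorm_eq_lintegral_rpow_enorm_toReal hp0 hptop, enorm_eq_self, rpow_iSup hp]
  rw [lintegral_iSup_directed (fun i => (hf i).pow_const _) hdir_rpow,
    rpow_iSup (one_div_pos.2 hp)]

theorem eLpNorm_tsum_le (hp : 1 ≤ p) (hf : ∀ i, AEMeasurable (f i) μ) :
    eLpNorm (fun x => ∑' i, f i x) p μ ≤ ∑' i, eLpNorm (f i) p μ := by
  have hsum (s : Finset ι) : AEMeasurable (∑ i ∈ s, f i) μ :=
    Finset.aemeasurable_sum s fun i _ => hf i
  have hdir : Directed (· ≤ ·) fun s : Finset ι => ∑ i ∈ s, f i :=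
    Monotone.directed_le fun s u hsu => Finset.sum_le_sum_of_subset hsu
  calc eLpNorm (fun x => ∑' i, f i x) p μ
      = eLpNorm (fun x => ⨆ s : Finset ι, (∑ i ∈ s, f i) x) p μ := by
        simp only [ENNReal.tsum_eq_iSup_sum, Finset.sum_apply]
    _ ≤ ⨆ s : Finset ι, eLpNorm (∑ i ∈ s, f i) p μ := eLpNorm_iSup_of_directed hsum hdir
    _ ≤ ⨆ s : Finset ι, ∑ i ∈ s, eLpNorm (f i) p μ :=
        iSup_mono fun s => eLpNorm_sum_le (fun i _ => (hf i).aestronglyMeasurable) hp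
    _ = ∑' i, eLpNorm (f i) p μ := ENNReal.tsum_eq_iSup_sum.symm

end LpNorm

section MulHaar

theorem ae_mulHaar_pos : ∀ᵐ t ∂mulHaar, 0 < t :=
  (withDensity_absolutelyContinuous _ _).ae_le (ae_restrict_mem measurableSet_Ioi)

theorem lintegral_mulHaar {f : ℝ → ℝ≥0∞} (hf : Measurable f) :
    ∫⁻ t, f t ∂mulHaar = ∫⁻ t in Ioi 0, ENNReal.ofReal t⁻¹ * f t :=
  lintegral_withDensity_eq_lintegral_mul _ (by fun_prop) hf

theorem map_mul_left_volume_restrict_Ioi {a : ℝ} (ha : 0 < a) :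
    (volume.restrict (Ioi (0 : ℝ))).map (a * ·)
      = ENNReal.ofReal a⁻¹ • volume.restrict (Ioi (0 : ℝ)) := by
  have hpre : (a * ·) ⁻¹' Ioi 0 = Ioi (0 : ℝ) := by ext t; simp [mul_pos_iff_of_pos_left ha]
  rw [← abs_of_pos (inv_pos.2 ha), ← Measure.restrict_smul, ← Real.map_volume_mul_left ha.ne',
    Measure.restrict_map (measurable_const_mul a) measurableSet_Ioi, hpre]

theorem measurePreserving_mul_left_mulHaar {a : ℝ} (ha : 0 < a) :
    MeasurePreserving (a * ·) mulHaar mulHaar := by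
  have hmul : Measurable (a * · : ℝ → ℝ) := measurable_const_mul a
  refine ⟨hmul, Measure.ext_of_lintegral _ fun f hf => ?_⟩
  have hscale (t : ℝ) : ENNReal.ofReal t⁻¹ = ENNReal.ofReal a * ENNReal.ofReal (a * t)⁻¹ := by
    rw [← ENNReal.ofReal_mul ha.le, mul_inv, mul_inv_cancel_left₀ ha.ne']
  calc ∫⁻ t, f t ∂mulHaar.map (a * ·)
      = ∫⁻ t in Ioi 0, ENNReal.ofReal t⁻¹ * f (a * t) := by
        rw [lintegral_map hf hmul, lintegral_mulHaar (by fun_prop)]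
    _ = ENNReal.ofReal a * ∫⁻ t in Ioi 0, ENNReal.ofReal (a * t)⁻¹ * f (a * t) := by
        rw [← lintegral_const_mul _ (by fun_prop)]
        simp only [← mul_assoc, ← hscale]
    _ = ENNReal.ofReal a * (ENNReal.ofReal a⁻¹ * ∫⁻ t in Ioi 0, ENNReal.ofReal t⁻¹ * f t) := by
        rw [← smul_eq_mul (ENNReal.ofReal a⁻¹), ← lintegral_smul_measure,
          ← map_mul_left_volume_restrict_Ioi ha, lintegral_map (by fun_prop) hmul]
    _ = ∫⁻ t, f t ∂mulHaar := by
        rw [lintegral_mulHaar hf, ← mul_assoc, ← ENNReal.ofReal_mul ha.le,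
          mul_inv_cancel₀ ha.ne', ENNReal.ofReal_one, one_mul]

variable {E ι : Type*} [NormedAddCommGroup E] [Countable ι] {g : ℝ → E} {p : ℝ≥0∞}

theorem eLpNorm_tsum_dilate_le (hp : 1 ≤ p) (hg : AEStronglyMeasurable g mulHaar) (c : ι → ℝ≥0)
    {u : ι → ℝ} (hu : ∀ i, 0 < u i) :
    eLpNorm (fun t => ∑' i, c i * ‖g (u i * t)‖ₑ) p mulHaar
      ≤ (∑' i, (c i : ℝ≥0∞)) * eLpNorm g p mulHaar := by
  have hdil (i : ι) := measurePreserving_mul_left_mulHaar (hu i)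
  have hdilate (i : ι) : eLpNorm (fun t => c i * ‖g (u i * t)‖ₑ) p mulHaar
      ≤ c i * eLpNorm g p mulHaar := by
    rw [← eLpNorm_comp_measurePreserving hg (hdil i)]
    exact eLpNorm_le_nnreal_smul_eLpNorm_of_ae_le_mul' (.of_forall fun t => le_rfl) p
  calc eLpNorm (fun t => ∑' i, c i * ‖g (u i * t)‖ₑ) p mulHaar
      ≤ ∑' i, eLpNorm (fun t => c i * ‖g (u i * t)‖ₑ) p mulHaar :=
        eLpNorm_tsum_le hp fun i => (hg.comp_measurePreserving (hdil i)).enorm.const_mul _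
    _ ≤ ∑' i, c i * eLpNorm g p mulHaar := ENNReal.tsum_le_tsum hdilate
    _ = _ := ENNReal.tsum_mul_right

end MulHaar

section Besov

omit [CompleteSpace X]

/-- The function `t ↦ t^{1-s}‖S(T(t)x)‖`, whose `L^q(dt/t)` norm is the Besov-type norm of `x` of
regularity `s`. For `s = 0` it is the scale-invariant quantity `t‖S(T(t)x)‖`, which analyticity
bounds. -/
def besovProfile (S : X → X) (T : ℝ → X →L[ℝ] X) (s : ℝ) (x : X) (t : ℝ) : ℝ :=
  t ^ (1 - s) * ‖S (T t x)‖

theorem enorm_besovProfile_zero (S : X → X) (T : ℝ → X →L[ℝ] X) (x : X) (t : ℝ) :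
    ‖besovProfile S T 0 x t‖ₑ = ‖t‖ₑ * ‖S (T t x)‖ₑ := by
  simp [besovProfile, enorm_mul]

theorem besovProfile_eq_rpow_neg_mul (S : X → X) (T : ℝ → X →L[ℝ] X) (s : ℝ) (x : X) {t : ℝ}
    (ht : 0 < t) : besovProfile S T s x t = t ^ (-s) * besovProfile S T 0 x t := by
  simp only [besovProfile]
  rw [← mul_assoc, ← Real.rpow_add ht]
  ring_nf

theorem rpow_neg_mul_besovProfile_zero_mul (S : X → X) (T : ℝ → X →L[ℝ] X) (s : ℝ) (x : X)
    {u t : ℝ} (hu : 0 < u) (ht : 0 < t) :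
    t ^ (-s) * besovProfile S T 0 x (u * t) = u ^ s * besovProfile S T s x (u * t) := by
  rw [besovProfile_eq_rpow_neg_mul S T s x (mul_pos hu ht), Real.mul_rpow hu.le ht.le,
    Real.rpow_neg hu.le]
  field_simp

namespace IsBAS

variable {D : Set X} {A : X → X} {T : ℝ → X →L[ℝ] X} {M C₀ : ℝ}

theorem generator_apply_add (hA : IsBAS D A T M C₀) {t a : ℝ} (ht : 0 ≤ t) (ha : 0 < a) (x : X) :
    A (T (t + a) x) = T t (A (T a x)) := by
  rw [hA.T_semigroup t ht a ha.le, ContinuousLinearMap.comp_apply,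
    hA.T_comm _ (hA.analytic_mem x a ha) t ht]

theorem continuousOn_generator_apply (hA : IsBAS D A T M C₀) (x : X) :
    ContinuousOn (fun t => A (T t x)) (Ioi 0) := by
  refine continuousOn_of_forall_continuousAt fun t (ht : 0 < t) => ?_
  have hlt : t / 2 < t := half_lt_self ht
  have heq : (fun u => T (u - t / 2) (A (T (t / 2) x))) =ᶠ[𝓝 t] fun u => A (T u x) := by
    filter_upwards [Ici_mem_nhds hlt] with u hu
    rw [← hA.generator_apply_add (sub_nonneg.2 hu) (half_pos ht), sub_add_cancel]
  have horbit : ContinuousAt (fun τ => T τ (A (T (t / 2) x))) (t - t / 2) :=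
    (hA.T_cont _).continuousAt (Ici_mem_nhds (sub_pos.2 hlt))
  exact (ContinuousAt.comp' (f := (· - t / 2)) horbit (by fun_prop)).congr heq

theorem continuousOn_besovProfile (hA : IsBAS D A T M C₀) (s : ℝ) (x : X) :
    ContinuousOn (besovProfile A T s x) (Ioi 0) :=
  (continuousOn_id.rpow_const fun _ ht => Or.inl (ne_of_gt ht)).mul
    (hA.continuousOn_generator_apply x).norm

theorem aestronglyMeasurable_besovProfile (hA : IsBAS D A T M C₀) (s : ℝ) (x : X) :
    AEStronglyMeasurable (besovProfile A T s x) mulHaar :=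
  ((hA.continuousOn_besovProfile s x).aestronglyMeasurable measurableSet_Ioi).mono_ac
    (withDensity_absolutelyContinuous _ _)

theorem enorm_apply_le (hA : IsBAS D A T M C₀) {t : ℝ} (ht : 0 ≤ t) (x : X) :
    ‖T t x‖ₑ ≤ ENNReal.ofReal M * ‖x‖ₑ :=
  enorm_le_ofReal_mul_enorm (hA.T_bdd t ht x)

theorem enorm_besovProfile_zero_le (hA : IsBAS D A T M C₀) {t : ℝ} (ht : 0 < t) (x : X) :
    ‖besovProfile A T 0 x t‖ₑ ≤ ENNReal.ofReal C₀ * ‖x‖ₑ := by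
  refine enorm_le_ofReal_mul_enorm ?_
  simpa [besovProfile, abs_of_pos ht] using hA.analytic_bdd x t ht

theorem norm_apply_sub_self_le (hA : IsBAS D A T M C₀) {x : X} (hx : x ∈ D) {t : ℝ} (ht : 0 ≤ t) :
    ‖T t x - x‖ ≤ M * ‖A x‖ * t := by
  have h := norm_image_sub_le_of_norm_deriv_le_segment' (f := fun τ => T τ x)
    (fun τ hτ => (hA.T_deriv x hx τ hτ.1).mono Icc_subset_Ici_self)
    (fun τ hτ => hA.T_bdd τ hτ.1 (A x)) t (right_mem_Icc.2 ht)
  simpa [hA.T_zero] using h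

theorem enorm_apply_two_mul_sub_apply_le (hA : IsBAS D A T M C₀) {t : ℝ} (ht : 0 < t) (x : X) :
    ‖T (2 * t) x - T t x‖ₑ ≤ ENNReal.ofReal M * ‖besovProfile A T 0 x t‖ₑ := by
  refine enorm_le_ofReal_mul_enorm ?_
  have h := hA.norm_apply_sub_self_le (hA.analytic_mem x t ht) ht.le
  rw [← ContinuousLinearMap.comp_apply, ← hA.T_semigroup t ht.le t ht.le, ← two_mul] at h
  simpa [besovProfile, abs_of_pos ht, mul_assoc, mul_comm t] using h

theorem tendsto_apply_one_half_pow_mul (hA : IsBAS D A T M C₀) {t : ℝ} (ht : 0 ≤ t) (x : X) :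
    Tendsto (fun k : ℕ => T ((1 / 2) ^ k * t) x) atTop (𝓝 x) := by
  have htime : Tendsto (fun k : ℕ => (1 / 2 : ℝ) ^ k * t) atTop (𝓝[≥] 0) := by
    refine tendsto_nhdsWithin_iff.2 ⟨?_, .of_forall fun k => mem_Ici.2 (by positivity)⟩
    simpa using (tendsto_pow_atTop_nhds_zero_of_lt_one (by norm_num) one_half_lt_one).mul_const t
  simpa [hA.T_zero, Function.comp_def] using (hA.T_cont x 0 self_mem_Ici).tendsto.comp htime

theorem enorm_apply_sub_self_le_tsum (hA : IsBAS D A T M C₀) {t : ℝ} (ht : 0 < t) (x : X) :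
    ‖T t x - x‖ₑ ≤
      ENNReal.ofReal M * ∑' k : ℕ, ‖besovProfile A T 0 x ((1 / 2) ^ (k + 1) * t)‖ₑ := by
  have hstep (k : ℕ) : edist (T ((1 / 2) ^ k * t) x) (T ((1 / 2) ^ (k + 1) * t) x)
      ≤ ENNReal.ofReal M * ‖besovProfile A T 0 x ((1 / 2) ^ (k + 1) * t)‖ₑ := by
    have htime : (1 / 2 : ℝ) ^ k * t = 2 * ((1 / 2) ^ (k + 1) * t) := by ring
    rw [edist_eq_enorm_sub, htime]
    exact hA.enorm_apply_two_mul_sub_apply_le (by positivity) x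
  have h := edist_le_tsum_of_edist_le_of_tendsto₀ _ hstep
    (hA.tendsto_apply_one_half_pow_mul ht.le x)
  rwa [ENNReal.tsum_mul_left, pow_zero, one_mul, edist_eq_enorm_sub] at h

variable {D' : Set X} {S : X → X} {T' : ℝ → X →L[ℝ] X} {M' C₀' K : ℝ}

theorem enorm_generator_apply_le_of_norm_le (hA : IsBAS D A T M C₀) (hS : IsBAS D' S T' M' C₀')
    (hD : D ⊆ D') (hK : ∀ y ∈ D, ‖S y‖ ≤ K * ‖A y‖) {t : ℝ} (ht : 0 < t) (x : X) :
    ‖S (T' t (T t x))‖ₑ ≤ ENNReal.ofReal M' * ENNReal.ofReal K * ‖A (T t x)‖ₑ := by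
  have hx : T t x ∈ D := hA.analytic_mem x t ht
  rw [hS.T_comm _ (hD hx) t ht.le, mul_assoc]
  exact (hS.enorm_apply_le ht.le _).trans (by gcongr; exact enorm_le_ofReal_mul_enorm (hK _ hx))

theorem enorm_besovProfile_zero_le_add (hA : IsBAS D A T M C₀) (hS : IsBAS D' S T' M' C₀')
    (hD : D ⊆ D') (hK : ∀ y ∈ D, ‖S y‖ ≤ K * ‖A y‖) {t : ℝ} (ht : 0 < t) (x : X) :
    ‖besovProfile S T' 0 x t‖ₑ ≤ ENNReal.ofReal C₀' * ‖T t x - x‖ₑ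
      + ENNReal.ofReal M' * ENNReal.ofReal K * ‖besovProfile A T 0 x t‖ₑ := by
  have hsplit : S (T' t x) = S (T' t (x - T t x)) + S (T' t (T t x)) := by
    rw [← hS.map_add _ (hS.analytic_mem _ t ht) _ (hS.analytic_mem _ t ht), ← _root_.map_add,
      sub_add_cancel]
  calc ‖besovProfile S T' 0 x t‖ₑ
      ≤ ‖t‖ₑ * (‖S (T' t (x - T t x))‖ₑ + ‖S (T' t (T t x))‖ₑ) := by
        rw [enorm_besovProfile_zero, hsplit]
        gcongr
        exact enorm_add_le _ _
    _ = ‖besovProfile S T' 0 (x - T t x) t‖ₑ + ‖t‖ₑ * ‖S (T' t (T t x))‖ₑ := by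
        rw [mul_add, enorm_besovProfile_zero]
    _ ≤ ENNReal.ofReal C₀' * ‖x - T t x‖ₑ
          + ‖t‖ₑ * (ENNReal.ofReal M' * ENNReal.ofReal K * ‖A (T t x)‖ₑ) := by
        gcongr
        · exact hS.enorm_besovProfile_zero_le ht _
        · exact hA.enorm_generator_apply_le_of_norm_le hS hD hK ht x
    _ = _ := by rw [enorm_sub_rev, enorm_besovProfile_zero, mul_left_comm]

theorem enorm_besovProfile_zero_le_tsum (hA : IsBAS D A T M C₀) (hS : IsBAS D' S T' M' C₀')
    (hD : D ⊆ D') (hK : ∀ y ∈ D, ‖S y‖ ≤ K * ‖A y‖) {t : ℝ} (ht : 0 < t) (x : X) :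
    ‖besovProfile S T' 0 x t‖ₑ ≤
      (ENNReal.ofReal C₀' * ENNReal.ofReal M + ENNReal.ofReal M' * ENNReal.ofReal K)
        * ∑' k : ℕ, ‖besovProfile A T 0 x ((1 / 2) ^ k * t)‖ₑ := by
  refine (hA.enorm_besovProfile_zero_le_add hS hD hK ht x).trans ?_
  rw [add_mul, mul_assoc (ENNReal.ofReal C₀')]
  gcongr
  · refine (hA.enorm_apply_sub_self_le_tsum ht x).trans ?_
    exact mul_le_mul_right (ENNReal.tsum_comp_le_tsum_of_injective Nat.succ_injective
      fun k => ‖besovProfile A T 0 x ((1 / 2) ^ k * t)‖ₑ) _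
  · simpa using ENNReal.le_tsum (f := fun k : ℕ => ‖besovProfile A T 0 x ((1 / 2) ^ k * t)‖ₑ) 0

theorem enorm_besovProfile_le_tsum (hA : IsBAS D A T M C₀) (hS : IsBAS D' S T' M' C₀')
    (hD : D ⊆ D') (hK : ∀ y ∈ D, ‖S y‖ ≤ K * ‖A y‖) (s : ℝ) {t : ℝ} (ht : 0 < t) (x : X) :
    ‖besovProfile S T' s x t‖ₑ ≤
      (ENNReal.ofReal C₀' * ENNReal.ofReal M + ENNReal.ofReal M' * ENNReal.ofReal K)
        * ∑' k : ℕ, (((1 / 2) ^ s) ^ k : ℝ≥0) * ‖besovProfile A T s x ((1 / 2) ^ k * t)‖ₑ := by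
  have hweight (k : ℕ) : ‖t ^ (-s)‖ₑ * ‖besovProfile A T 0 x ((1 / 2) ^ k * t)‖ₑ
      = (((1 / 2 : ℝ≥0) ^ s) ^ k : ℝ≥0) * ‖besovProfile A T s x ((1 / 2) ^ k * t)‖ₑ := by
    rw [← enorm_mul, rpow_neg_mul_besovProfile_zero_mul A T s x (by positivity) ht, enorm_mul,
      ← Real.rpow_pow_comm (by norm_num) s k]
    congr 1
    rw [Real.enorm_eq_ofReal (by positivity), ← ENNReal.ofReal_coe_nnreal]
    push_cast
    rfl
  have h := hA.enorm_besovProfile_zero_le_tsum hS hD hK ht x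
  calc ‖besovProfile S T' s x t‖ₑ = ‖t ^ (-s)‖ₑ * ‖besovProfile S T' 0 x t‖ₑ := by
        rw [besovProfile_eq_rpow_neg_mul S T' s x ht, enorm_mul]
    _ ≤ ‖t ^ (-s)‖ₑ * (_ * ∑' k : ℕ, ‖besovProfile A T 0 x ((1 / 2) ^ k * t)‖ₑ) := by gcongr
    _ = _ := by rw [mul_left_comm, ← ENNReal.tsum_mul_left]; simp only [hweight]

theorem exists_eLpNorm_besovProfile_le (hA : IsBAS D A T M C₀) (hS : IsBAS D' S T' M' C₀')
    (hD : D ⊆ D') (hK : ∀ y ∈ D, ‖S y‖ ≤ K * ‖A y‖) {s : ℝ} (hs : 0 < s) {q : ℝ≥0∞}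
    (hq : 1 ≤ q) :
    ∃ C : ℝ, 0 < C ∧ ∀ x, eLpNorm (besovProfile S T' s x) q mulHaar
      ≤ ENNReal.ofReal C * eLpNorm (besovProfile A T s x) q mulHaar := by
  set r : ℝ≥0 := (1 / 2) ^ s
  set L : ℝ≥0 := C₀'.toNNReal * M.toNNReal + M'.toNNReal * K.toNNReal
  have hr : r < 1 := NNReal.rpow_lt_one one_half_lt_one hs
  have hgeom : ∑' k : ℕ, ((r ^ k : ℝ≥0) : ℝ≥0∞) = ((1 - r)⁻¹ : ℝ≥0) := by
    rw [← ENNReal.coe_tsum (NNReal.summable_geometric hr), NNReal.tsum_geometric hr]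
  refine ⟨L * (1 - r)⁻¹ + 1, by positivity, fun x => ?_⟩
  calc eLpNorm (besovProfile S T' s x) q mulHaar
      ≤ L * eLpNorm (fun t => ∑' k : ℕ, ((r ^ k : ℝ≥0) : ℝ≥0∞)
          * ‖besovProfile A T s x ((1 / 2) ^ k * t)‖ₑ) q mulHaar :=
        eLpNorm_le_nnreal_smul_eLpNorm_of_ae_le_mul' (ae_mulHaar_pos.mono fun t ht => by
          simpa only [L, ENNReal.coe_add, ENNReal.coe_mul, enorm_eq_self] using!
            hA.enorm_besovProfile_le_tsum hS hD hK s ht x) q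
    _ ≤ L * (((1 - r)⁻¹ : ℝ≥0) * eLpNorm (besovProfile A T s x) q mulHaar) := by
        gcongr
        rw [← hgeom]
        exact eLpNorm_tsum_dilate_le hq (hA.aestronglyMeasurable_besovProfile s x) _
          fun k => by positivity
    _ ≤ ENNReal.ofReal (L * (1 - r)⁻¹ + 1) * eLpNorm (besovProfile A T s x) q mulHaar := by
        rw [← mul_assoc, ← ENNReal.coe_mul, ← ENNReal.ofReal_coe_nnreal]
        gcongr
        simp

end IsBAS

theorem equiv_norms_positive_regularity_general
    {D : Set X} {A S : X → X} {TA TS : ℝ → X →L[ℝ] X} {MA CA MS CS K K' : ℝ}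
    (hA : IsBAS D A TA MA CA) (hS : IsBAS D S TS MS CS)
    (hSA : ∀ y ∈ D, ‖S y‖ ≤ K * ‖A y‖)
    (hAS : ∀ y ∈ D, ‖A y‖ ≤ K' * ‖S y‖) {s : ℝ} (hs : 0 < s) {q : ℝ≥0∞} (hq : 1 ≤ q) :
    ∃ c : ℝ, 0 < c ∧ ∃ C : ℝ, 0 < C ∧ ∀ x,
      ENNReal.ofReal c * eLpNorm (fun t : ℝ => t ^ (1 - s) * ‖A (TA t x)‖) q mulHaar
        ≤ eLpNorm (fun t : ℝ => t ^ (1 - s) * ‖S (TS t x)‖) q mulHaar ∧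
      eLpNorm (fun t : ℝ => t ^ (1 - s) * ‖S (TS t x)‖) q mulHaar
        ≤ ENNReal.ofReal C * eLpNorm (fun t : ℝ => t ^ (1 - s) * ‖A (TA t x)‖) q mulHaar := by
  obtain ⟨C, hC, hle⟩ := hA.exists_eLpNorm_besovProfile_le hS subset_rfl hSA hs hq
  obtain ⟨C', hC', hle'⟩ := hS.exists_eLpNorm_besovProfile_le hA subset_rfl hAS hs hq
  refine ⟨C'⁻¹, inv_pos.2 hC', C, hC, fun x => ⟨?_, hle x⟩⟩
  rw [ENNReal.ofReal_inv_of_pos hC']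
  exact (ENNReal.inv_mul_le_iff (by simpa) ENNReal.ofReal_ne_top).2 (hle' x)

end Besov

/-- Equivalence of Besov-type norms with positive regularity for a composite
operator: if `A` generates a decaying bounded analytic semigroup `T_A`, `B` is a
continuous linear bijection with continuous inverse, and `S = B∘A` (with the same
domain) generates a decaying bounded analytic semigroup `T_S`, then for all
`s ∈ (0,1)`, `q ∈ [1,∞]` the norms `‖t^{1−s}‖S(T_S(t)x)‖‖_{L^q(dt/t)}` and
`‖t^{1−s}‖A(T_A(t)x)‖‖_{L^q(dt/t)}` are equivalent, uniformly in `x ∈ D(A)`. -/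
theorem equiv_norms_positive_regularity
    (DA : Set X) (A : X → X) (B : X ≃L[ℝ] X)
    (TA TS : ℝ → X →L[ℝ] X) (MA CA MS CS : ℝ)
    (hA : IsBAS DA A TA MA CA)
    (hAdecay : ∀ x : X, Filter.Tendsto (fun t => ‖TA t x‖) Filter.atTop (nhds 0))
    (hS : IsBAS DA (fun x => B (A x)) TS MS CS)
    (hSdecay : ∀ x : X, Filter.Tendsto (fun t => ‖TS t x‖) Filter.atTop (nhds 0))
    (s : ℝ) (hs0 : 0 < s) (hs1 : s < 1) (q : ℝ≥0∞) (hq : 1 ≤ q) :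
    ∃ c : ℝ, 0 < c ∧ ∃ C : ℝ, 0 < C ∧ ∀ x ∈ DA,
      ENNReal.ofReal c *
          eLpNorm (fun t : ℝ => t ^ (1 - s) * ‖A (TA t x)‖) q mulHaar
        ≤ eLpNorm (fun t : ℝ => t ^ (1 - s) * ‖B (A (TS t x))‖) q mulHaar ∧
      eLpNorm (fun t : ℝ => t ^ (1 - s) * ‖B (A (TS t x))‖) q mulHaar
        ≤ ENNReal.ofReal C *
            eLpNorm (fun t : ℝ => t ^ (1 - s) * ‖A (TA t x)‖) q mulHaar := by
  obtain ⟨c, hc, C, hC, h⟩ := equiv_norms_positive_regularity_general hA hS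
    (fun y _ => (B : X →L[ℝ] X).le_opNorm (A y))
    (fun y _ => by simpa using (B.symm : X →L[ℝ] X).le_opNorm (B (A y))) hs0 hq
  exact ⟨c, hc, C, hC, fun x _ => h x⟩
end
end
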